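/- Let M = J¹(Q,ℝ) = ℝ × T*Q with coordinates (z, q^i, p_j) and the canonical contact form η = dz − p_i dq^i, whose Reeb vector field is R = ∂_z. For a smooth function Ĥ : M → ℝ let X^c_Ĥ be the unique vector field on M with ι_{X^c_Ĥ}η = −Ĥ and ι_{X^c_Ĥ}dη = dĤ − R(Ĥ)·η. Given a smooth function S : Q → ℝ, let L₀(S) = j¹S(Q) = {(S(q), q^i, ∂S/∂q^j(q)) : q ∈ Q}, a Legendre submanifold of M; the canonical projection π¹_Q : M → Q maps L₀(S) diffeomorphically onto Q, so it maps X^c_Ĥ restricted to L₀(S) to a vector field X̲ on Q. Then X̲ and X^c_Ĥ are j¹S-related if and only if Ĥ(S(q), q^i, ∂S/∂q^j(q)) = 0 for all q ∈ Q. -/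

import Mathlib

/-!
Write `X^c_Ĥ(j¹S(q)) = (a, u, β)`. Since `T(j¹S)(u) = (dS(u), u, D²S(u, ·))`, relatedness at `q`
amounts to `a = dS(u)` and `β = D²S(u, ·)`. The first equation says `η(X^c_Ĥ) = 0`, that is
`Ĥ(j¹S(q)) = 0`. Conversely, if `Ĥ ∘ j¹S` vanishes identically, then `dĤ` and `η` both vanish on
the vectors `T(j¹S)(v)`, so `dη(X^c_Ĥ, T(j¹S)(v)) = D²S(v, u) - β(v) = 0`, and the second equation
follows from the symmetry of `D²S`.
-/

open Function Set

noncomputable section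

variable {F : Type*} [NormedAddCommGroup F] [NormedSpace ℝ F]

/-- The canonical contact form `η = dz - p dq` of `M = J¹(Q,ℝ) = ℝ × T*Q`
(points `m = (z, q, p)`, tangent vectors `w = (a, u, β)`): `η(w) = a - p(u)`. -/
def etaJet (m : ℝ × F × (F →L[ℝ] ℝ)) (w : ℝ × F × (F →L[ℝ] ℝ)) : ℝ :=
  w.1 - m.2.2 w.2.1

/-- The exterior derivative `dη = dq ∧ dp` of the canonical contact form:
`dη(w, w') = γ(u) - β(v)` for `w = (a,u,β)`, `w' = (b,v,γ)`. -/
def detaJet (w w' : ℝ × F × (F →L[ℝ] ℝ)) : ℝ :=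
  w'.2.2 w.2.1 - w.2.2 w'.2.1

/-- The first jet prolongation `j¹S : Q → J¹(Q,ℝ)`, `q ↦ (S(q), q, dS(q))`. -/
def jetProl (S : F → ℝ) (q : F) : ℝ × F × (F →L[ℝ] ℝ) :=
  (S q, q, fderiv ℝ S q)

theorem hasFDerivAt_jetProl {F : Type*} [NormedAddCommGroup F] [NormedSpace ℝ F]
    {S : F → ℝ} (hS : ContDiff ℝ (⊤ : ℕ∞) S) (q : F) :
    HasFDerivAt (jetProl S)
      ((fderiv ℝ S q).prod ((ContinuousLinearMap.id ℝ F).prod (fderiv ℝ (fderiv ℝ S) q))) q := by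
  have h1 : HasFDerivAt S (fderiv ℝ S q) q := (hS.differentiable (by simp) q).hasFDerivAt
  have h2 : HasFDerivAt (fderiv ℝ S) (fderiv ℝ (fderiv ℝ S) q) q :=
    ((hS.fderiv_right (m := 1) (by norm_cast)).differentiable (by simp) q).hasFDerivAt
  exact h1.prodMk ((hasFDerivAt_id q).prodMk h2)

/-- Contact Jacobi theorem on `M = J¹(Q,ℝ) = ℝ × T*Q`: the projection of the contact
Hamiltonian vector field `X^c_Ĥ` along the Legendre submanifold `L₀(S) = j¹S(Q)` is
`j¹S`-related to `X^c_Ĥ` if and only if `Ĥ ∘ j¹S = 0` (the contact Hamilton–Jacobi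
equation). -/
theorem stmt_18 {n : ℕ} {F : Type*} [NormedAddCommGroup F] [NormedSpace ℝ F]
    [FiniteDimensional ℝ F] (hdim : Module.finrank ℝ F = n)
    -- the contact Hamiltonian `Ĥ`
    (H : ℝ × F × (F →L[ℝ] ℝ) → ℝ) (hH : ContDiff ℝ (⊤ : ℕ∞) H)
    -- the contact Hamiltonian vector field `X^c_Ĥ`, determined by
    -- `ι_X η = -Ĥ` and `ι_X dη = dĤ - R(Ĥ)·η`, where `R = ∂_z = (1,0,0)`
    (Xc : ℝ × F × (F →L[ℝ] ℝ) → ℝ × F × (F →L[ℝ] ℝ))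
    (hXc1 : ∀ m : ℝ × F × (F →L[ℝ] ℝ), etaJet m (Xc m) = -H m)
    (hXc2 : ∀ m w : ℝ × F × (F →L[ℝ] ℝ),
      detaJet (Xc m) w = fderiv ℝ H m w - fderiv ℝ H m (1, 0, 0) * etaJet m w)
    -- a function `S : Q → ℝ`, generating the Legendre submanifold `L₀(S) = j¹S(Q)`
    (S : F → ℝ) (hS : ContDiff ℝ (⊤ : ℕ∞) S) :
    -- the projected vector field `X̲ q = Tπ¹_Q (X^c_Ĥ(j¹S(q)))` is `j¹S`-related to
    -- `X^c_Ĥ` iff the contact Hamilton–Jacobi equation `Ĥ ∘ j¹S = 0` holds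
    (∀ q : F, fderiv ℝ (jetProl S) q ((Xc (jetProl S q)).2.1) = Xc (jetProl S q)) ↔
      (∀ q : F, H (jetProl S q) = 0) := by
  have key : ∀ q v : F, fderiv ℝ (jetProl S) q v =
      (fderiv ℝ S q v, v, fderiv ℝ (fderiv ℝ S) q v) := fun q v => by
    rw [(hasFDerivAt_jetProl hS q).fderiv]; rfl
  have eta : ∀ q : F, (Xc (jetProl S q)).1 - fderiv ℝ S q (Xc (jetProl S q)).2.1 =
      -H (jetProl S q) := fun q => hXc1 (jetProl S q)
  constructor
  · intro h q
    have h1 := congrArg Prod.fst (h q)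
    rw [key] at h1
    have h2 := eta q
    simp only at h1
    linarith
  · intro h q
    rw [key]
    have h2 := eta q
    rw [h q] at h2
    refine Prod.ext (by simp only; linarith) (Prod.ext rfl ?_)
    ext v
    -- the chain rule applied to `Ĥ ∘ j¹S = 0`
    have hd : fderiv ℝ H (jetProl S q) (fderiv ℝ S q v, v, fderiv ℝ (fderiv ℝ S) q v) = 0 := by
      have hc := ((hH.differentiable (by simp) (jetProl S q)).hasFDerivAt).comp q
        (hasFDerivAt_jetProl hS q)
      have h0 : H ∘ jetProl S = fun _ => (0 : ℝ) := funext h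
      rw [h0] at hc
      exact congrArg (fun L : F →L[ℝ] ℝ => L v) (hc.unique (hasFDerivAt_const (0 : ℝ) q))
    have hw := hXc2 (jetProl S q) (fderiv ℝ S q v, v, fderiv ℝ (fderiv ℝ S) q v)
    rw [hd] at hw
    have hsymm : IsSymmSndFDerivAt ℝ S q :=
      hS.contDiffAt.isSymmSndFDerivAt (by
        simpa using WithTop.coe_le_coe.2 (le_top : (2 : ℕ∞) ≤ ⊤))
    have hs := hsymm.eq v (Xc (jetProl S q)).2.1
    simp only [detaJet, etaJet, jetProl, sub_self, mul_zero] at hw hs ⊢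
    linarith
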